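/- Let F > 0. Define the standard normal pdf φ(x) = exp(−x²/2)/√(2π) and cdf N(x) = ∫_{−∞}^x φ(u) du. For k ∈ ℝ and w > 0 set d₊(k,w) = −k/√w + √w/2, d₋(k,w) = −k/√w − √w/2, and C_BS(k,w) = F·(N(d₊(k,w)) − exp(k)·N(d₋(k,w))). Let w : ℝ → ℝ be twice differentiable with w(k) > 0 for all k, define g(k) := (1 − k·w′(k)/(2·w(k)))² − (w′(k)²/4)·(1/w(k) + 1/4) + w″(k)/2 and Ĉ(K) := C_BS(log(K/F), w(log(K/F))) for K > 0. Then Ĉ″(K) ≥ 0 for every K > 0 if and only if g(k) ≥ 0 for every k ∈ ℝ. -/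

import Mathlib

open MeasureTheory

/-- Standard normal pdf. -/
noncomputable def gauss (x : ℝ) : ℝ := Real.exp (-x ^ 2 / 2) / Real.sqrt (2 * Real.pi)

/-- Standard normal cdf. -/
noncomputable def normCdf (x : ℝ) : ℝ := ∫ u in Set.Iic x, gauss u

/-- Black–Scholes `d₊` in log-moneyness `k` and total variance `w`. -/
noncomputable def dplus (k w : ℝ) : ℝ := -k / Real.sqrt w + Real.sqrt w / 2

/-- Black–Scholes `d₋` in log-moneyness `k` and total variance `w`. -/
noncomputable def dminus (k w : ℝ) : ℝ := -k / Real.sqrt w - Real.sqrt w / 2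

/-- Undiscounted forward Black–Scholes call price. -/
noncomputable def CBS (F k w : ℝ) : ℝ :=
  F * (normCdf (dplus k w) - Real.exp k * normCdf (dminus k w))

/-!
Along a smile, the derivative of the call price in the strike is `φ(d₋) v - N(d₋)` with
`v = (√w)'`, because `φ(d₊) = eᵏ φ(d₋)` and `d₊ - d₋ = √w`. Since `φ' = -x φ`, differentiating once
more in `k` gives `φ(d₋) (v' - d₋' (1 + d₋ v))`. With `a = 1 - k w' / (2 w)` one has
`d₋' = -(a + w' / 4) / √w` and `1 + d₋ v = a - w' / 4`, so the difference of squares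
`a² - w'² / 16` appears, and `√w v' = w'' / 2 - w'² / (4 w)` completes it to `g`.
-/

open Filter Topology ProbabilityTheory

theorem hasDerivAt_integral_Iic {E : Type*} [NormedAddCommGroup E] [NormedSpace ℝ E]
    [CompleteSpace E] {f : ℝ → E} {x : ℝ} (hf : ∀ y, IntegrableOn f (Set.Iic y))
    (hx : ContinuousAt f x) : HasDerivAt (fun y => ∫ u in Set.Iic y, f u) (f x) x := by
  have hmeas : StronglyMeasurableAtFilter f (𝓝 x) :=
    ⟨Set.Iic (x + 1), Iic_mem_nhds (lt_add_one x), (hf _).aestronglyMeasurable⟩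
  have hint : HasDerivAt (fun y => ∫ u in x..y, f u) (f x) x :=
    intervalIntegral.integral_hasDerivAt_right IntervalIntegrable.refl hmeas hx
  refine (hint.const_add (∫ u in Set.Iic x, f u)).congr_of_eventuallyEq (.of_forall fun y => ?_)
  exact sub_eq_iff_eq_add'.1 (intervalIntegral.integral_Iic_sub_Iic (hf x) (hf y))

theorem gauss_eq_gaussianPDFReal : gauss = gaussianPDFReal 0 1 := by
  funext x
  simp [gauss, gaussianPDFReal, div_eq_inv_mul]

theorem gauss_pos (x : ℝ) : 0 < gauss x := by
  unfold gauss
  positivity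

theorem integrable_gauss : Integrable gauss :=
  gauss_eq_gaussianPDFReal ▸ integrable_gaussianPDFReal 0 1

theorem hasDerivAt_gauss (x : ℝ) : HasDerivAt gauss (-x * gauss x) x := by
  have hexponent : HasDerivAt (fun y : ℝ => -y ^ 2 / 2) (-x) x :=
    ((hasDerivAt_pow 2 x).fun_neg.div_const 2).congr_deriv (by ring)
  exact (hexponent.exp.div_const _).congr_deriv (by unfold gauss; ring)

theorem hasDerivAt_normCdf (x : ℝ) : HasDerivAt normCdf (gauss x) x :=
  hasDerivAt_integral_Iic (fun _ => integrable_gauss.integrableOn) (hasDerivAt_gauss x).continuousAt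

theorem dplus_eq_dminus_add_sqrt (k w : ℝ) : dplus k w = dminus k w + √w := by
  unfold dplus dminus
  ring

theorem gauss_dplus (k : ℝ) {w : ℝ} (hw : 0 < w) :
    gauss (dplus k w) = Real.exp k * gauss (dminus k w) := by
  have hsqrt : √w ≠ 0 := (Real.sqrt_pos.2 hw).ne'
  have hexponent : -dplus k w ^ 2 / 2 = k + -dminus k w ^ 2 / 2 := by
    unfold dplus dminus
    field_simp
    ring
  rw [gauss, gauss, hexponent, Real.exp_add, mul_div_assoc]

theorem one_add_dminus_mul_div_two_sqrt (k w' : ℝ) {w : ℝ} (hw : 0 < w) :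
    1 + dminus k w * (w' / (2 * √w)) = 1 - k * w' / (2 * w) - w' / 4 := by
  have hsqrt : √w ≠ 0 := (Real.sqrt_pos.2 hw).ne'
  have hsq : w = √w ^ 2 := (Real.sq_sqrt hw.le).symm
  unfold dminus
  generalize √w = s at *
  subst hsq
  field_simp
  ring

theorem hasDerivAt_dminus {w : ℝ → ℝ} {w' k : ℝ} (hw : HasDerivAt w w' k) (hpos : 0 < w k) :
    HasDerivAt (fun x => dminus x (w x)) (-(1 - k * w' / (2 * w k) + w' / 4) / √(w k)) k := by
  have hsqrt : √(w k) ≠ 0 := (Real.sqrt_pos.2 hpos).ne'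
  have hsq : w k = √(w k) ^ 2 := (Real.sq_sqrt hpos.le).symm
  have hσ := hw.sqrt hpos.ne'
  refine (((hasDerivAt_id k).fun_neg.fun_div hσ hsqrt).fun_sub (hσ.div_const 2)).congr_deriv ?_
  generalize √(w k) = s at *
  rw [hsq, id]
  field_simp
  ring

theorem hasDerivAt_dplus {w : ℝ → ℝ} {w' k : ℝ} (hw : HasDerivAt w w' k) (hpos : 0 < w k) :
    HasDerivAt (fun x => dplus x (w x))
      (-(1 - k * w' / (2 * w k) + w' / 4) / √(w k) + w' / (2 * √(w k))) k := by
  simp only [dplus_eq_dminus_add_sqrt]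
  exact (hasDerivAt_dminus hw hpos).fun_add (hw.sqrt hpos.ne')

section Smile

/-- The derivative of the call price in the strike, along the total-variance smile `w`, as a
function of log-moneyness. -/
noncomputable def dualDelta (w : ℝ → ℝ) (k : ℝ) : ℝ :=
  gauss (dminus k (w k)) * (deriv w k / (2 * √(w k))) - normCdf (dminus k (w k))

/-- Durrleman's function `g` of the total-variance smile `w`. -/
noncomputable def durrleman (w : ℝ → ℝ) (k : ℝ) : ℝ :=
  (1 - k * deriv w k / (2 * w k)) ^ 2 - (deriv w k) ^ 2 / 4 * (1 / w k + 1 / 4)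
    + deriv (deriv w) k / 2

variable {w : ℝ → ℝ} {k : ℝ}

theorem hasDerivAt_CBS_smile (F : ℝ) (hw : DifferentiableAt ℝ w k) (hpos : 0 < w k) :
    HasDerivAt (fun x => CBS F x (w x)) (F * Real.exp k * dualDelta w k) k := by
  have hNplus := (hasDerivAt_normCdf _).comp k (hasDerivAt_dplus hw.hasDerivAt hpos)
  have hNminus := (hasDerivAt_normCdf _).comp k (hasDerivAt_dminus hw.hasDerivAt hpos)
  refine ((hNplus.fun_sub ((Real.hasDerivAt_exp k).fun_mul hNminus)).const_mul F).congr_deriv ?_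
  rw [gauss_dplus k hpos, dualDelta, Function.comp_apply]
  ring

theorem hasDerivAt_deriv_div_two_sqrt (hw : DifferentiableAt ℝ w k)
    (hw' : DifferentiableAt ℝ (deriv w) k) (hpos : 0 < w k) :
    HasDerivAt (fun x => deriv w x / (2 * √(w x)))
      ((deriv (deriv w) k / 2 - deriv w k ^ 2 / (4 * w k)) / √(w k)) k := by
  have hsqrt : √(w k) ≠ 0 := (Real.sqrt_pos.2 hpos).ne'
  have hsq : w k = √(w k) ^ 2 := (Real.sq_sqrt hpos.le).symm
  have hden := (hw.hasDerivAt.sqrt hpos.ne').const_mul 2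
  refine (hw'.hasDerivAt.fun_div hden (mul_ne_zero two_ne_zero hsqrt)).congr_deriv ?_
  generalize √(w k) = s at *
  rw [hsq]
  field_simp
  ring

theorem hasDerivAt_dualDelta (hw : DifferentiableAt ℝ w k) (hw' : DifferentiableAt ℝ (deriv w) k)
    (hpos : 0 < w k) :
    HasDerivAt (dualDelta w) (gauss (dminus k (w k)) / √(w k) * durrleman w k) k := by
  have hd := hasDerivAt_dminus hw.hasDerivAt hpos
  have hφ := (hasDerivAt_gauss _).comp k hd
  have hN := (hasDerivAt_normCdf _).comp k hd
  have hv := hasDerivAt_deriv_div_two_sqrt hw hw' hpos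
  refine ((hφ.fun_mul hv).fun_sub hN).congr_deriv ?_
  rw [Function.comp_apply]
  set φ := gauss (dminus k (w k))
  set d := dminus k (w k)
  set v := deriv w k / (2 * √(w k))
  set a := 1 - k * deriv w k / (2 * w k) with ha
  set v' := (deriv (deriv w) k / 2 - deriv w k ^ 2 / (4 * w k)) / √(w k) with hv'
  calc -d * φ * (-(a + deriv w k / 4) / √(w k)) * v + φ * v' - φ * (-(a + deriv w k / 4) / √(w k))
      = φ * (v' + (a + deriv w k / 4) / √(w k) * (1 + d * v)) := by ring
    _ = φ * (v' + (a + deriv w k / 4) / √(w k) * (a - deriv w k / 4)) := by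
        rw [one_add_dminus_mul_div_two_sqrt k _ hpos]
    _ = φ / √(w k) * durrleman w k := by
        rw [durrleman, ← ha, hv']
        ring

end Smile

section Strike

/-- The call price `Ĉ` as a function of the strike `K`, with forward `F` and total-variance
smile `w`. It is meaningful for `0 < K / F` only, since `Real.log` is even. -/
noncomputable def strikeCall (F : ℝ) (w : ℝ → ℝ) (K : ℝ) : ℝ :=
  CBS F (Real.log (K / F)) (w (Real.log (K / F)))

variable {F K : ℝ} {w : ℝ → ℝ}

theorem hasDerivAt_log_div_const (hF : F ≠ 0) (hK : K ≠ 0) :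
    HasDerivAt (fun x => Real.log (x / F)) K⁻¹ K :=
  (((hasDerivAt_id K).div_const F).log (div_ne_zero hK hF)).congr_deriv (by rw [id]; field_simp)

theorem forall_log_div_const_iff (hF : 0 < F) {P : ℝ → Prop} :
    (∀ K, 0 < K → P (Real.log (K / F))) ↔ ∀ k, P k := by
  refine ⟨fun h k => ?_, fun h K _ => h _⟩
  have hlog : Real.log (F * Real.exp k / F) = k := by
    rw [mul_div_cancel_left₀ _ hF.ne', Real.log_exp]
  exact hlog ▸ h _ (mul_pos hF (Real.exp_pos k))

theorem hasDerivAt_strikeCall (hF : 0 < F) (hK : 0 < K)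
    (hw : DifferentiableAt ℝ w (Real.log (K / F))) (hpos : 0 < w (Real.log (K / F))) :
    HasDerivAt (strikeCall F w) (dualDelta w (Real.log (K / F))) K := by
  refine ((hasDerivAt_CBS_smile F hw hpos).comp K
    (hasDerivAt_log_div_const hF.ne' hK.ne')).congr_deriv ?_
  rw [Real.exp_log (div_pos hK hF)]
  field_simp

theorem deriv_strikeCall_eventuallyEq (hF : 0 < F) (hK : 0 < K)
    (hw : ∀ᶠ k in 𝓝 (Real.log (K / F)), DifferentiableAt ℝ w k)
    (hpos : 0 < w (Real.log (K / F))) :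
    deriv (strikeCall F w) =ᶠ[𝓝 K] fun x => dualDelta w (Real.log (x / F)) := by
  have hlog : Tendsto (fun x => Real.log (x / F)) (𝓝 K) (𝓝 (Real.log (K / F))) :=
    (hasDerivAt_log_div_const hF.ne' hK.ne').continuousAt
  have hpos_nhds : ∀ᶠ k in 𝓝 (Real.log (K / F)), 0 < w k :=
    hw.self_of_nhds.continuousAt.eventually_const_lt hpos
  filter_upwards [eventually_gt_nhds hK, hlog.eventually hw, hlog.eventually hpos_nhds]
    with x hx hwx hposx
  exact (hasDerivAt_strikeCall hF hx hwx hposx).deriv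

theorem deriv_deriv_strikeCall (hF : 0 < F) (hK : 0 < K)
    (hw : ∀ᶠ k in 𝓝 (Real.log (K / F)), DifferentiableAt ℝ w k)
    (hw' : DifferentiableAt ℝ (deriv w) (Real.log (K / F))) (hpos : 0 < w (Real.log (K / F))) :
    deriv (deriv (strikeCall F w)) K =
      F * gauss (dplus (Real.log (K / F)) (w (Real.log (K / F))))
        / (K ^ 2 * √(w (Real.log (K / F)))) * durrleman w (Real.log (K / F)) := by
  have hdelta := (hasDerivAt_dualDelta hw.self_of_nhds hw' hpos).comp K
    (hasDerivAt_log_div_const hF.ne' hK.ne')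
  refine ((deriv_strikeCall_eventuallyEq hF hK hw hpos).deriv_eq.trans hdelta.deriv).trans ?_
  rw [gauss_dplus _ hpos, Real.exp_log (div_pos hK hF)]
  field_simp

theorem butterfly_criterion_general (hF : 0 < F) (hK : 0 < K)
    (hw : ∀ᶠ k in 𝓝 (Real.log (K / F)), DifferentiableAt ℝ w k)
    (hw' : DifferentiableAt ℝ (deriv w) (Real.log (K / F))) (hpos : 0 < w (Real.log (K / F))) :
    0 ≤ deriv (deriv (strikeCall F w)) K ↔ 0 ≤ durrleman w (Real.log (K / F)) := by
  have hgauss := gauss_pos (dplus (Real.log (K / F)) (w (Real.log (K / F))))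
  rw [deriv_deriv_strikeCall hF hK hw hw' hpos]
  exact mul_nonneg_iff_of_pos_left (by positivity)

end Strike

/-- Butterfly-arbitrage criterion: `Ĉ″(K) ≥ 0` for all `K > 0` iff Durrleman's
function `g(k)` is nonnegative for all `k`. -/
theorem butterfly_criterion (F : ℝ) (hF : 0 < F)
    (w : ℝ → ℝ) (hw1 : Differentiable ℝ w) (hw2 : Differentiable ℝ (deriv w))
    (hwpos : ∀ k, 0 < w k) :
    (∀ K : ℝ, 0 < K →
        0 ≤ deriv (deriv (fun K : ℝ => CBS F (Real.log (K / F)) (w (Real.log (K / F))))) K)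
      ↔
    (∀ k : ℝ,
        0 ≤ (1 - k * deriv w k / (2 * w k)) ^ 2
              - (deriv w k) ^ 2 / 4 * (1 / w k + 1 / 4)
              + deriv (deriv w) k / 2) := by
  have hstrike (K : ℝ) (hK : 0 < K) :
      0 ≤ deriv (deriv (strikeCall F w)) K ↔ 0 ≤ durrleman w (Real.log (K / F)) :=
    butterfly_criterion_general hF hK (.of_forall hw1) (hw2 _) (hwpos _)
  exact (forall₂_congr hstrike).trans (forall_log_div_const_iff hF (P := (0 ≤ durrleman w ·)))
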